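/- Let d ≥ 1, c > 0, K ∈ ℕ, let C_1, …, C_K be positive integers, and let x ≠ y ∈ ℝ^d. Let S_1, …, S_K be pairwise disjoint finite subsets of the open interval (0,1) with card S_k ≤ C_k, and set S = ⋃_{k=1}^K S_k. Let v : ℝ^d → ℝ and write g(s) = v(x + s(y−x)) for s ∈ [0,1]. Assume: (i) for every s ∈ (0,1)∖S, v is differentiable at x + s(y−x) with gradient ∇v(x+s(y−x)), and s ↦ ‖∇v(x+s(y−x))‖^2 is integrable on (0,1); (ii) g is continuous at 0 and at 1, and at each ξ ∈ S the one-sided limits g(ξ−) = lim_{s↑ξ} g(s) and g(ξ+) = lim_{s↓ξ} g(s) exist; (iii) for any two consecutive points α < β of S ∪ {0,1} (i.e. (α,β) ∩ S = ∅), one has g(β−) − g(α+) = ∫_α^β ∇v(x+s(y−x))·(y−x) ds, where g(0+), g(1−) are replaced by g(0), g(1). Then |v(y) − v(x)|^2 ≤ (1 + 1/c)·‖x−y‖^2·∫_0^1 ‖∇v(x+s(y−x))‖^2 ds + (1 + 1/c)·Σ_{k=1}^K (1+c)^k·C_k·Σ_{ξ∈S_k} (g(ξ+) − g(ξ−))^2.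 -/

import Mathlib

open Set MeasureTheory
open scoped RealInnerProductSpace

/-!
Restricted to the segment, `v` is a function of one variable with finitely many jumps, so its
increment is the integral of its derivative plus the sum of its jumps, grouped by interface family.
The weighted Cauchy–Schwarz inequality with weights `1` for the integral and `(1 + c) ^ k` for the
`k`-th group then gives the estimate: the reciprocals of the weights sum to at most the geometric
series `∑ (1 + c)⁻ᵏ = 1 + 1 / c`. Cauchy–Schwarz on the integral and inside each group produces the
Dirichlet energy and the factors `C k`.
-/

section WeightedCauchySchwarz

variable {c : ℝ}

theorem sum_inv_one_add_pow_le (hc : 0 < c) (s : Finset ℕ) :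
    ∑ k ∈ s, (1 + c)⁻¹ ^ k ≤ 1 + 1 / c := by
  have hr0 : 0 ≤ (1 + c)⁻¹ := by positivity
  have hr1 : (1 + c)⁻¹ < 1 := inv_lt_one_of_one_lt₀ (by linarith)
  calc ∑ k ∈ s, (1 + c)⁻¹ ^ k
      ≤ ∑' k : ℕ, (1 + c)⁻¹ ^ k :=
        (summable_geometric_of_lt_one hr0 hr1).sum_le_tsum s fun k _ => pow_nonneg hr0 k
    _ = (1 - (1 + c)⁻¹)⁻¹ := tsum_geometric_of_lt_one hr0 hr1
    _ = 1 + 1 / c := by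
        have hsub : 1 - (1 + c)⁻¹ = c / (1 + c) := by
          field_simp
          ring
        rw [hsub, inv_div, add_div, div_self hc.ne', add_comm]

theorem sq_sum_le_sum_one_add_pow_mul_sq (hc : 0 < c) (s : Finset ℕ) (a : ℕ → ℝ) :
    (∑ k ∈ s, a k) ^ 2 ≤ (1 + 1 / c) * ∑ k ∈ s, (1 + c) ^ k * a k ^ 2 := by
  calc (∑ k ∈ s, a k) ^ 2
      ≤ (∑ k ∈ s, (1 + c)⁻¹ ^ k) * ∑ k ∈ s, (1 + c) ^ k * a k ^ 2 :=
        Finset.sum_sq_le_sum_mul_sum_of_sq_le_mul s (fun k _ => by positivity)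
          (fun k _ => by positivity) fun k _ => by
            rw [inv_pow, inv_mul_cancel_left₀ (by positivity)]
    _ ≤ (1 + 1 / c) * ∑ k ∈ s, (1 + c) ^ k * a k ^ 2 :=
        mul_le_mul_of_nonneg_right (sum_inv_one_add_pow_le hc s)
          (Finset.sum_nonneg fun k _ => by positivity)

theorem sq_add_sum_le_sq_add_sum_one_add_pow_mul_sq (hc : 0 < c) {s : Finset ℕ} (hs : 0 ∉ s)
    (b : ℝ) (a : ℕ → ℝ) :
    (b + ∑ k ∈ s, a k) ^ 2 ≤ (1 + 1 / c) * (b ^ 2 + ∑ k ∈ s, (1 + c) ^ k * a k ^ 2) := by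
  have hne : ∀ k ∈ s, k ≠ 0 := fun k hk hk0 => hs (hk0 ▸ hk)
  have hsum : ∑ k ∈ s, Function.update a 0 b k = ∑ k ∈ s, a k :=
    Finset.sum_update_of_notMem hs a b
  have hsum_sq : ∑ k ∈ s, (1 + c) ^ k * Function.update a 0 b k ^ 2
      = ∑ k ∈ s, (1 + c) ^ k * a k ^ 2 :=
    Finset.sum_congr rfl fun k hk => by rw [Function.update_of_ne (hne k hk)]
  simpa only [Finset.sum_insert hs, hsum, hsum_sq, Function.update_self, pow_zero, one_mul]
    using sq_sum_le_sum_one_add_pow_mul_sq hc (insert 0 s) (Function.update a 0 b)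

theorem sq_add_sum_sum_le_of_card_le {ι : Type*} (hc : 0 < c) {s : Finset ℕ} (hs : 0 ∉ s)
    {S : ℕ → Finset ι} {C : ℕ → ℕ} (hcard : ∀ k ∈ s, (S k).card ≤ C k) (b : ℝ) (a : ι → ℝ) :
    (b + ∑ k ∈ s, ∑ i ∈ S k, a i) ^ 2 ≤
      (1 + 1 / c) * (b ^ 2 + ∑ k ∈ s, (1 + c) ^ k * C k * ∑ i ∈ S k, a i ^ 2) := by
  have hgroup : ∀ k ∈ s, (∑ i ∈ S k, a i) ^ 2 ≤ C k * ∑ i ∈ S k, a i ^ 2 := fun k hk =>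
    sq_sum_le_card_mul_sum_sq.trans <| by
      gcongr
      exact hcard k hk
  refine (sq_add_sum_le_sq_add_sum_one_add_pow_mul_sq hc hs b _).trans ?_
  simp only [mul_assoc]
  gcongr with k hk
  exact hgroup k hk

end WeightedCauchySchwarz

section JumpFormula

open Filter Topology

variable {F : Type*} [NormedAddCommGroup F] [NormedSpace ℝ F] [CompleteSpace F]

theorem sub_eq_integral_add_sum_jumps {f f' fm fp : ℝ → F} {a b : ℝ} {fa fb : F} {T : Finset ℝ}
    (hab : a < b) (hT : (T : Set ℝ) ⊆ Ioo a b)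
    (hderiv : ∀ s ∈ Ioo a b \ (T : Set ℝ), HasDerivAt f (f' s) s)
    (hint : IntervalIntegrable f' volume a b)
    (ha : Tendsto f (𝓝[>] a) (𝓝 fa)) (hb : Tendsto f (𝓝[<] b) (𝓝 fb))
    (hm : ∀ ξ ∈ T, Tendsto f (𝓝[<] ξ) (𝓝 (fm ξ)))
    (hp : ∀ ξ ∈ T, Tendsto f (𝓝[>] ξ) (𝓝 (fp ξ))) :
    fb - fa = (∫ s in a..b, f' s) + ∑ ξ ∈ T, (fp ξ - fm ξ) := by
  induction T using Finset.induction_on_max generalizing b fb with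
  | empty =>
    rw [Finset.sum_empty, add_zero, intervalIntegral.integral_eq_sub_of_hasDerivAt_of_tendsto hab
      (fun s hs => hderiv s ⟨hs, by simp⟩) hint ha hb]
  | insert m T hmax ih =>
    have hmT : m ∉ T := fun h => (hmax m h).false
    rw [Finset.coe_insert, insert_subset_iff] at hT
    obtain ⟨⟨ham, hmb⟩, hTab⟩ := hT
    rw [Finset.forall_mem_insert] at hm hp
    have hint_left : IntervalIntegrable f' volume a m :=
      hint.mono_set (uIcc_subset_uIcc_left (mem_uIcc_of_le ham.le hmb.le))
    have hint_right : IntervalIntegrable f' volume m b :=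
      hint.mono_set (uIcc_subset_uIcc_right (mem_uIcc_of_le ham.le hmb.le))
    have hleft : fm m - fa = (∫ s in a..m, f' s) + ∑ ξ ∈ T, (fp ξ - fm ξ) :=
      ih ham (fun ξ hξ => ⟨(hTab hξ).1, hmax ξ hξ⟩)
        (fun s hs => hderiv s ⟨⟨hs.1.1, hs.1.2.trans hmb⟩, by simpa using ⟨hs.1.2.ne, hs.2⟩⟩)
        hint_left hm.1 hm.2 hp.2
    have hright : ∫ s in m..b, f' s = fb - fp m :=
      intervalIntegral.integral_eq_sub_of_hasDerivAt_of_tendsto hmb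
        (fun s hs => hderiv s ⟨⟨ham.trans hs.1, hs.2⟩, by
          simpa using ⟨hs.1.ne', fun h => (hmax s h).not_gt hs.1⟩⟩)
        hint_right hp.1 hb
    rw [Finset.sum_insert hmT,
      ← intervalIntegral.integral_add_adjacent_intervals hint_left hint_right, hright]
    calc fb - fa = (fm m - fa) + (fb - fp m) + (fp m - fm m) := by abel
      _ = _ := by rw [hleft]; abel

theorem aestronglyMeasurable_restrict_of_hasDerivAt_off_countable {μ : Measure ℝ}
    [NullSingletonClass μ] {f f' : ℝ → F} {s t : Set ℝ} (hs : MeasurableSet s) (ht : t.Countable)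
    (hderiv : ∀ x ∈ s \ t, HasDerivAt f (f' x) x) :
    AEStronglyMeasurable f' (μ.restrict s) := by
  refine (aestronglyMeasurable_deriv f (μ.restrict s)).congr ?_
  filter_upwards [ae_restrict_mem hs, ae_restrict_of_ae (ht.ae_notMem μ)] with x hxs hxt
  exact (hderiv x ⟨hxs, hxt⟩).deriv

end JumpFormula

section Inner

variable {E : Type*} [NormedAddCommGroup E] [InnerProductSpace ℝ E]

theorem sq_real_inner_le (u w : E) : ⟪u, w⟫ ^ 2 ≤ ‖w‖ ^ 2 * ‖u‖ ^ 2 := by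
  rw [← mul_pow, mul_comm, ← sq_abs]
  exact pow_le_pow_left₀ (abs_nonneg _) (abs_real_inner_le_norm u w) 2

theorem memLp_two_inner_const {α : Type*} [MeasurableSpace α] {μ : Measure α} {G : α → E} {w : E}
    (hmeas : AEStronglyMeasurable (fun s => ⟪G s, w⟫) μ)
    (hG : Integrable (fun s => ‖G s‖ ^ 2) μ) :
    MemLp (fun s => ⟪G s, w⟫) 2 μ := by
  refine (memLp_two_iff_integrable_sq hmeas).2 ((hG.const_mul (‖w‖ ^ 2)).mono' (hmeas.pow 2) ?_)
  filter_upwards with s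
  rw [Real.norm_of_nonneg (sq_nonneg _)]
  exact sq_real_inner_le (G s) w

theorem sq_integral_inner_const_le {α : Type*} [MeasurableSpace α] {μ : Measure α}
    [IsProbabilityMeasure μ] {G : α → E} {w : E}
    (hmeas : AEStronglyMeasurable (fun s => ⟪G s, w⟫) μ)
    (hG : Integrable (fun s => ‖G s‖ ^ 2) μ) :
    (∫ s, ⟪G s, w⟫ ∂μ) ^ 2 ≤ ‖w‖ ^ 2 * ∫ s, ‖G s‖ ^ 2 ∂μ := by
  have hL2 := memLp_two_inner_const hmeas hG
  calc (∫ s, ⟪G s, w⟫ ∂μ) ^ 2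
      ≤ ∫ s, ⟪G s, w⟫ ^ 2 ∂μ := by
        have hvar := ProbabilityTheory.variance_eq_sub hL2
        exact sub_nonneg.1 (hvar ▸ ProbabilityTheory.variance_nonneg _ μ)
    _ ≤ ∫ s, ‖w‖ ^ 2 * ‖G s‖ ^ 2 ∂μ :=
        integral_mono hL2.integrable_sq (hG.const_mul _) fun s => sq_real_inner_le (G s) w
    _ = ‖w‖ ^ 2 * ∫ s, ‖G s‖ ^ 2 ∂μ := integral_const_mul _ _

theorem hasDerivAt_comp_add_smul_of_hasGradientAt [CompleteSpace E] {v : E → ℝ} {x w grad : E}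
    {s : ℝ} (hv : HasGradientAt v grad (x + s • w)) :
    HasDerivAt (fun t : ℝ => v (x + t • w)) ⟪grad, w⟫ s := by
  have hline : HasDerivAt (fun t : ℝ => x + t • w) w s := by
    simpa using ((hasDerivAt_id s).smul_const w).const_add x
  exact (hv.hasFDerivAt.comp_hasDerivAt s hline).congr_deriv
    InnerProductSpace.toDual_apply_apply

end Inner

theorem fundamental_estimate_segment_general {E : Type*} [NormedAddCommGroup E]
    [InnerProductSpace ℝ E] [CompleteSpace E] {c : ℝ} (hc : 0 < c) {K : ℕ} {C : ℕ → ℕ} {x y : E}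
    {S : ℕ → Finset ℝ} (hSsub : ∀ k ∈ Finset.Icc 1 K, (S k : Set ℝ) ⊆ Ioo 0 1)
    (hScard : ∀ k ∈ Finset.Icc 1 K, (S k).card ≤ C k)
    (hSdisj : ∀ k ∈ Finset.Icc 1 K, ∀ l ∈ Finset.Icc 1 K, k ≠ l → Disjoint (S k) (S l))
    {v : E → ℝ} {G : E → E} {g : ℝ → ℝ} (hg : ∀ s, g s = v (x + s • (y - x))) {gm gp : ℝ → ℝ}
    (hdiff : ∀ s ∈ Ioo (0 : ℝ) 1 \ (((Finset.Icc 1 K).biUnion S : Finset ℝ) : Set ℝ),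
      HasGradientAt v (G (x + s • (y - x))) (x + s • (y - x)))
    (hint : IntegrableOn (fun s : ℝ => ‖G (x + s • (y - x))‖ ^ 2) (Ioo (0 : ℝ) 1))
    (hg0 : ContinuousWithinAt g (Icc 0 1) 0) (hg1 : ContinuousWithinAt g (Icc 0 1) 1)
    (hgm : ∀ ξ ∈ (Finset.Icc 1 K).biUnion S,
      Filter.Tendsto g (nhdsWithin ξ (Iio ξ)) (nhds (gm ξ)))
    (hgp : ∀ ξ ∈ (Finset.Icc 1 K).biUnion S,
      Filter.Tendsto g (nhdsWithin ξ (Ioi ξ)) (nhds (gp ξ))) :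
    |v y - v x| ^ 2 ≤
      (1 + 1 / c) * ‖x - y‖ ^ 2 * (∫ s in (0 : ℝ)..1, ‖G (x + s • (y - x))‖ ^ 2)
        + (1 + 1 / c) * ∑ k ∈ Finset.Icc 1 K, (1 + c) ^ k * (C k : ℝ) *
            ∑ ξ ∈ S k, (gp ξ - gm ξ) ^ 2 := by
  set T := (Finset.Icc 1 K).biUnion S with hT
  set φ : ℝ → ℝ := fun s => ⟪G (x + s • (y - x)), y - x⟫
  have hTsub : (T : Set ℝ) ⊆ Ioo 0 1 := by
    simpa only [hT, Finset.coe_biUnion, iUnion_subset_iff, Finset.mem_coe] using hSsub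
  have hderiv : ∀ s ∈ Ioo (0 : ℝ) 1 \ (T : Set ℝ), HasDerivAt g (φ s) s := fun s hs =>
    funext hg ▸ hasDerivAt_comp_add_smul_of_hasGradientAt (hdiff s hs)
  have hmeas : AEStronglyMeasurable φ (volume.restrict (Ioo 0 1)) :=
    aestronglyMeasurable_restrict_of_hasDerivAt_off_countable measurableSet_Ioo
      T.countable_toSet hderiv
  have : IsProbabilityMeasure (volume.restrict (Ioo (0 : ℝ) 1)) := ⟨by simp⟩
  have hφ : IntervalIntegrable φ volume 0 1 :=
    (intervalIntegrable_iff_integrableOn_Ioo_of_le zero_le_one).2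
      ((memLp_two_inner_const hmeas hint).integrable one_le_two)
  have hincrement : v y - v x
      = (∫ s in (0 : ℝ)..1, φ s) + ∑ k ∈ Finset.Icc 1 K, ∑ ξ ∈ S k, (gp ξ - gm ξ) := by
    rw [← Finset.sum_biUnion hSdisj, ← sub_eq_integral_add_sum_jumps zero_lt_one hTsub hderiv hφ
      (hg0.mono_of_mem_nhdsWithin (Icc_mem_nhdsGT zero_lt_one))
      (hg1.mono_of_mem_nhdsWithin (Icc_mem_nhdsLT zero_lt_one)) hgm hgp, hg, hg]
    simp
  have henergy : (∫ s in (0 : ℝ)..1, φ s) ^ 2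
      ≤ ‖x - y‖ ^ 2 * ∫ s in (0 : ℝ)..1, ‖G (x + s • (y - x))‖ ^ 2 := by
    simpa only [intervalIntegral.integral_of_le zero_le_one, integral_Ioc_eq_integral_Ioo,
      norm_sub_rev x y] using sq_integral_inner_const_le hmeas hint
  rw [sq_abs, hincrement, mul_assoc (1 + 1 / c), ← mul_add]
  refine (sq_add_sum_sum_le_of_card_le hc (by simp) hScard _ _).trans ?_
  gcongr

theorem fundamental_estimate_segment
    (d : ℕ) (hd : 1 ≤ d) (c : ℝ) (hc : 0 < c) (K : ℕ) (C : ℕ → ℕ)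
    (hC : ∀ k ∈ Finset.Icc 1 K, 0 < C k)
    (x y : EuclideanSpace ℝ (Fin d)) (hxy : x ≠ y)
    (S : ℕ → Finset ℝ)
    (hSsub : ∀ k ∈ Finset.Icc 1 K, (S k : Set ℝ) ⊆ Set.Ioo 0 1)
    (hScard : ∀ k ∈ Finset.Icc 1 K, (S k).card ≤ C k)
    (hSdisj : ∀ k ∈ Finset.Icc 1 K, ∀ l ∈ Finset.Icc 1 K, k ≠ l → Disjoint (S k) (S l))
    (v : EuclideanSpace ℝ (Fin d) → ℝ)
    (G : EuclideanSpace ℝ (Fin d) → EuclideanSpace ℝ (Fin d))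
    (g : ℝ → ℝ) (hg : ∀ s, g s = v (x + s • (y - x)))
    (gm gp : ℝ → ℝ)
    -- (i) differentiability off the crossing points, with square-integrable gradient
    (hdiff : ∀ s ∈ Set.Ioo (0:ℝ) 1 \ (((Finset.Icc 1 K).biUnion S : Finset ℝ) : Set ℝ),
      HasGradientAt v (G (x + s • (y - x))) (x + s • (y - x)))
    (hint : MeasureTheory.IntegrableOn (fun s : ℝ => ‖G (x + s • (y - x))‖ ^ 2) (Set.Ioo (0:ℝ) 1))
    -- (ii) continuity at the endpoints and one-sided limits at the crossing points
    (hg0 : ContinuousWithinAt g (Set.Icc 0 1) 0)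
    (hg1 : ContinuousWithinAt g (Set.Icc 0 1) 1)
    (hgm : ∀ ξ ∈ (Finset.Icc 1 K).biUnion S,
      Filter.Tendsto g (nhdsWithin ξ (Set.Iio ξ)) (nhds (gm ξ)))
    (hgp : ∀ ξ ∈ (Finset.Icc 1 K).biUnion S,
      Filter.Tendsto g (nhdsWithin ξ (Set.Ioi ξ)) (nhds (gp ξ)))
    -- (iii) fundamental theorem of calculus between consecutive crossing points
    (hftc : ∀ α β : ℝ,
      α ∈ insert (0:ℝ) (insert 1 (((Finset.Icc 1 K).biUnion S : Finset ℝ) : Set ℝ)) →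
      β ∈ insert (0:ℝ) (insert 1 (((Finset.Icc 1 K).biUnion S : Finset ℝ) : Set ℝ)) →
      α < β →
      Set.Ioo α β ∩ (((Finset.Icc 1 K).biUnion S : Finset ℝ) : Set ℝ) = ∅ →
      (if β = 1 then g 1 else gm β) - (if α = 0 then g 0 else gp α)
        = ∫ s in α..β, ⟪G (x + s • (y - x)), y - x⟫) :
    |v y - v x| ^ 2 ≤
      (1 + 1 / c) * ‖x - y‖ ^ 2 * (∫ s in (0:ℝ)..1, ‖G (x + s • (y - x))‖ ^ 2)
        + (1 + 1 / c) * ∑ k ∈ Finset.Icc 1 K, (1 + c) ^ k * (C k : ℝ) *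
            ∑ ξ ∈ S k, (gp ξ - gm ξ) ^ 2 :=
  fundamental_estimate_segment_general hc hSsub hScard hSdisj hg hdiff hint hg0 hg1 hgm hgp
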